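/- arXiv:1606.07119 — 3 statements merged into one kernel-verified Lean document; each statement's English description precedes it below -/
import Mathlib

section
/- Fix an integer m ≥ 3 and let S = {ℓ ∈ ℕ : 1 ≤ ℓ < m/2 and gcd(ℓ, m) = 1}, a set of cardinality φ(m)/2 where φ is Euler's totient function. Then the vectors v_k ∈ ℝ^S (for k ∈ S) defined by v_k(ℓ) = 1/sin²(πkℓ/m) form a basis of ℝ^S; equivalently, the S × S real matrix with (k, ℓ) entry 1/sin²(πkℓ/m) has nonzero determinant. -/
/-!
Parseval's identity for `t ↦ exp (2πixt)` on `[0, 1]` gives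
`∑ n : ℤ, 1 / (n + x)² = π² / sin² (πx)`, so that `csc² (πa/m)` is, up to the factor `2 / π²`, the
even Hurwitz zeta function of `a/m` at `2`. The set `S` represents the group `(ℤ/mℤ)ˣ/{±1}`, hence
the matrix is a group matrix for it. By Dedekind and Frobenius such a matrix is nonsingular as soon
as every character sum of its entry function is nonzero, and here the character sums are, up to
nonzero factors, the values `L(2, χ)` at even Dirichlet characters `χ`.
-/

open Real HurwitzZeta ZMod MeasureTheory

theorem norm_fourierCoeffOn_exp_mul_I {x : ℝ} {n : ℤ} (hxn : (n : ℝ) ≠ x) :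
    ‖fourierCoeffOn zero_lt_one (fun t : ℝ ↦ Complex.exp ((2 * π * x * t : ℝ) * Complex.I)) n‖ =
      |sin (π * x)| / (π * |x - n|) := by
  have hfreq : Complex.I * (2 * π * (x - n) : ℝ) ≠ 0 := by
    simpa [pi_ne_zero, sub_ne_zero, ← Complex.ofReal_intCast] using hxn.symm
  have hcoeff : fourierCoeffOn zero_lt_one
      (fun t : ℝ ↦ Complex.exp ((2 * π * x * t : ℝ) * Complex.I)) n =
        ∫ t in (0 : ℝ)..1, Complex.exp (Complex.I * (2 * π * (x - n) : ℝ) * t) := by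
    rw [fourierCoeffOn_eq_integral]
    simp only [sub_zero, div_one, one_smul, fourier_coe_apply, smul_eq_mul, ← Complex.exp_add]
    congr! 3 with t
    push_cast
    ring
  have hperiod : |sin (π * (x - n))| = |sin (π * x)| := by
    rw [mul_sub, mul_comm π (n : ℝ), sin_sub_int_mul_pi, abs_mul]
    simp
  calc
    _ = ‖2 * sin (2 * π * (x - n) / 2)‖ / |2 * π * (x - n)| := by
      rw [hcoeff, integral_exp_mul_complex hfreq, norm_div, norm_mul, Complex.norm_I, one_mul,
        Complex.norm_real, norm_eq_abs, ← Complex.norm_exp_I_mul_ofReal_sub_one]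
      simp
    _ = |2 * sin (π * (x - n))| / |2 * π * (x - n)| := by
      rw [norm_eq_abs, mul_assoc, mul_div_cancel_left₀ _ two_ne_zero]
    _ = |sin (π * x)| / (π * |x - n|) := by
      rw [abs_mul, mul_assoc 2, abs_mul 2, mul_div_mul_left _ _ (by simp), abs_mul π,
        abs_of_pos pi_pos, hperiod]

theorem hasSum_int_one_div_add_sq {x : ℝ} (hx : ∀ n : ℤ, (n : ℝ) ≠ x) :
    HasSum (fun n : ℤ ↦ 1 / (n + x) ^ 2) (π ^ 2 / sin (π * x) ^ 2) := by
  have hsin : sin (π * x) ≠ 0 := by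
    refine sin_ne_zero_iff.mpr fun n h ↦ hx n ?_
    exact mul_right_cancel₀ pi_ne_zero (by rw [h, mul_comm])
  have hL2 : MemLp (fun t : ℝ ↦ Complex.exp ((2 * π * x * t : ℝ) * Complex.I)) 2
      (volume.restrict (Set.Ioc 0 1)) :=
    .of_bound (by fun_prop) 1 (.of_forall fun t ↦ (Complex.norm_exp_ofReal_mul_I _).le)
  have hparseval : HasSum (fun n : ℤ ↦ (|sin (π * x)| / (π * |x - n|)) ^ 2) 1 := by
    simpa [Complex.norm_exp_ofReal_mul_I, norm_fourierCoeffOn_exp_mul_I (hx _), -Complex.ofReal_mul]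
      using hasSum_sq_fourierCoeffOn zero_lt_one hL2
  rw [← (Equiv.neg ℤ).hasSum_iff]
  convert! hparseval.mul_left (π ^ 2 / sin (π * x) ^ 2) using 1
  · funext n
    have hxn : x - n ≠ 0 := sub_ne_zero.mpr (hx n).symm
    simp only [Function.comp_apply, Equiv.neg_apply, Int.cast_neg, div_pow, mul_pow, sq_abs]
    rw [neg_add_eq_sub]
    generalize sin (π * x) = σ at hsin
    field_simp
  · rw [mul_one]

theorem hurwitzZetaEven_two {x : ℝ} (hx : (x : UnitAddCircle) ≠ 0) :
    hurwitzZetaEven x 2 = (π ^ 2 / 2 * (1 / sin (π * x) ^ 2) : ℝ) := by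
  have hint (n : ℤ) : (n : ℝ) ≠ x := by
    rintro rfl
    exact hx ((AddCircle.coe_eq_zero_iff 1).mpr ⟨n, by simp⟩)
  have hzeta := hasSum_int_hurwitzZetaEven x (s := 2) (by norm_num)
  have hcsc := Complex.hasSum_ofReal.mpr ((hasSum_int_one_div_add_sq hint).div_const 2)
  convert hzeta.unique (hcsc.congr_fun fun n ↦ ?_) using 2
  · ring
  · rw [Complex.cpow_ofNat, ← Complex.ofReal_pow, sq_abs]
    push_cast
    rfl

theorem hurwitzZetaEven_toAddCircle_natCast_two {m : ℕ} [NeZero m] {a : ℕ} (ha : (a : ZMod m) ≠ 0) :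
    hurwitzZetaEven (toAddCircle (a : ZMod m)) 2 = (π ^ 2 / 2 * (1 / sin (π * a / m) ^ 2) : ℝ) := by
  rw [← toAddCircle_eq_zero.ne] at ha
  rw [toAddCircle_natCast] at ha ⊢
  rw [hurwitzZetaEven_two ha, mul_div_assoc π]

theorem span_range_monoidHom_eq_top {G K : Type*} [CommGroup G] [Finite G] [Field K]
    [HasEnoughRootsOfUnity K (Monoid.exponent G)] :
    Submodule.span K (Set.range fun (ψ : G →* Kˣ) g ↦ (ψ g : K)) = ⊤ := by
  cases nonempty_fintype G
  have hinj : Function.Injective fun ψ : G →* Kˣ ↦ (Units.coeHom K).comp ψ :=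
    fun ψ ψ' h ↦ MonoidHom.ext fun g ↦ Units.ext (DFunLike.congr_fun h g)
  have hindep : LinearIndependent K fun (ψ : G →* Kˣ) g ↦ (ψ g : K) :=
    (linearIndependent_monoidHom G K).comp _ hinj
  have : Fintype (G →* Kˣ) := Fintype.ofFinite _
  have hcard : Fintype.card (G →* Kˣ) = Module.finrank K (G → K) := by
    rw [Module.finrank_pi, ← Nat.card_eq_fintype_card, ← Nat.card_eq_fintype_card,
      CommGroup.card_monoidHom_of_hasEnoughRootsOfUnity]
  exact hindep.span_eq_top_of_card_eq_finrank' hcard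

/-- The group matrix of a function `f` on `G`, indexed here by `f (g * h)` rather than the customary
`f (g * h⁻¹)`; the two differ by a permutation of the columns. -/
def groupMatrix {G R : Type*} [Mul G] (f : G → R) : Matrix G G R :=
  .of fun g h ↦ f (g * h)

section GroupDeterminant

variable {G : Type*} [CommGroup G] [Fintype G]

theorem sum_monoidHom_inv_mul_groupMatrix_mulVec {R : Type*} [CommSemiring R] (ψ : G →* Rˣ)
    (f v : G → R) :
    ∑ g, (ψ⁻¹ g : R) * (groupMatrix f).mulVec v g =
      (∑ g, (ψ⁻¹ g : R) * f g) * ∑ h, (ψ h : R) * v h := by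
  have htranslate (h : G) :
      ∑ g, (ψ⁻¹ g : R) * f (g * h) = (ψ h : R) * ∑ g, (ψ⁻¹ g : R) * f g := by
    rw [← Equiv.sum_comp (Equiv.mulRight h) fun g ↦ (ψ⁻¹ g : R) * f g, Finset.mul_sum]
    refine Finset.sum_congr rfl fun g _ ↦ ?_
    simp [← mul_assoc, mul_comm]
  calc
    _ = ∑ g, (ψ⁻¹ g : R) * ∑ h, f (g * h) * v h := rfl
    _ = ∑ h, (∑ g, (ψ⁻¹ g : R) * f (g * h)) * v h := by
      simp_rw [Finset.mul_sum, Finset.sum_mul, mul_assoc]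
      exact Finset.sum_comm
    _ = _ := by
      rw [Finset.mul_sum]
      exact Finset.sum_congr rfl fun h _ ↦ by rw [htranslate]; ring

variable {K : Type*} [Field K] [HasEnoughRootsOfUnity K (Monoid.exponent G)]

theorem eq_zero_of_forall_sum_monoidHom_mul_eq_zero {v : G → K}
    (hv : ∀ ψ : G →* Kˣ, ∑ g, (ψ g : K) * v g = 0) : v = 0 := by
  classical
  have hzero : Fintype.linearCombination K v = 0 :=
    LinearMap.ext_on_range span_range_monoidHom_eq_top hv
  ext g
  simpa [hzero] using (Fintype.linearCombination_apply_single K v g 1).symm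

theorem det_groupMatrix_ne_zero [DecidableEq G] {f : G → K}
    (hf : ∀ ψ : G →* Kˣ, ∑ g, (ψ g : K) * f g ≠ 0) : (groupMatrix f).det ≠ 0 := by
  intro hdet
  obtain ⟨v, hv, hker⟩ := Matrix.exists_mulVec_eq_zero_iff.mpr hdet
  refine hv (eq_zero_of_forall_sum_monoidHom_mul_eq_zero fun ψ ↦ ?_)
  have hmul := sum_monoidHom_inv_mul_groupMatrix_mulVec ψ f v
  simp_rw [hker, Pi.zero_apply, mul_zero, Finset.sum_const_zero] at hmul
  exact (mul_eq_zero.mp hmul.symm).resolve_left (hf ψ⁻¹)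

end GroupDeterminant

theorem sum_comp_monoidHom_of_surjective {G H M : Type*} [Group G] [Fintype G] [Monoid H]
    [Fintype H] [DecidableEq H] [AddCommMonoid M] {p : G →* H} (hp : Function.Surjective p)
    (F : H → M) : ∑ g, F (p g) = Fintype.card {g // p g = 1} • ∑ h, F h := by
  rw [Finset.smul_sum, Finset.sum_comp F p, Finset.image_univ_of_surjective hp]
  refine Finset.sum_congr rfl fun h _ ↦ ?_
  rw [MonoidHom.card_fiber_eq_of_mem_range p (hp h) (hp 1), Fintype.card_subtype]

theorem sum_units_mul_hurwitzZetaEven_ne_zero {m : ℕ} [NeZero m] {χ : DirichletCharacter ℂ m}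
    (hχ : χ.Even) {s : ℂ} (hs : 1 ≤ s.re) (hχs : χ ≠ 1 ∨ s ≠ 1) :
    ∑ u : (ZMod m)ˣ, χ u * hurwitzZetaEven (toAddCircle (u : ZMod m)) s ≠ 0 := by
  have hsum : ∑ u : (ZMod m)ˣ, χ u * hurwitzZetaEven (toAddCircle (u : ZMod m)) s =
      ∑ a : ZMod m, χ a * hurwitzZetaEven (toAddCircle a) s := by
    refine Fintype.sum_of_injective _ Units.val_injective _ _ (fun a ha ↦ ?_) fun _ ↦ rfl
    rw [χ.map_nonunit ha, zero_mul]
  have hL := χ.LFunction_ne_zero_of_one_le_re hχs hs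
  rw [DirichletCharacter.LFunction, LFunction_def_even hχ.to_fun] at hL
  exact hsum ▸ right_ne_zero_of_mul hL

theorem mem_zpowers_neg_one_iff {G : Type*} [Group G] [HasDistribNeg G] {g : G} :
    g ∈ Subgroup.zpowers (-1 : G) ↔ g = 1 ∨ g = -1 := by
  constructor
  · rintro ⟨n, rfl⟩
    exact n.even_or_odd.imp (fun hn ↦ by simp [hn.neg_zpow]) fun hn ↦ by simp [hn.neg_zpow]
  · rintro (rfl | rfl)
    exacts [one_mem _, Subgroup.mem_zpowers _]

/-- The group `(ℤ/mℤ)ˣ/{±1}`, whose characters are the even Dirichlet characters modulo `m`. -/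
def UnitsModSign (m : ℕ) : Type :=
  (ZMod m)ˣ ⧸ Subgroup.zpowers (-1 : (ZMod m)ˣ)

namespace UnitsModSign

variable {m : ℕ}

instance : CommGroup (UnitsModSign m) :=
  inferInstanceAs (CommGroup ((ZMod m)ˣ ⧸ Subgroup.zpowers (-1 : (ZMod m)ˣ)))

/-- The quotient map from the units modulo `m`. -/
def mk : (ZMod m)ˣ →* UnitsModSign m :=
  QuotientGroup.mk' (Subgroup.zpowers (-1 : (ZMod m)ˣ))

theorem mk_surjective : Function.Surjective (mk : (ZMod m)ˣ →* UnitsModSign m) :=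
  QuotientGroup.mk'_surjective _

theorem mk_eq_mk_iff {u v : (ZMod m)ˣ} : mk u = mk v ↔ u = v ∨ u = -v := by
  have hmem : mk u = mk v ↔ v⁻¹ * u ∈ Subgroup.zpowers (-1) := eq_comm.trans QuotientGroup.eq
  rw [hmem, mem_zpowers_neg_one_iff, inv_mul_eq_one, inv_mul_eq_iff_eq_mul, mul_neg_one,
    eq_comm]

variable [NeZero m]

noncomputable instance : Fintype (UnitsModSign m) :=
  have : Finite (UnitsModSign m) := .of_surjective mk mk_surjective
  .ofFinite _

/-- The even Hurwitz zeta function of `u / m` at `s`, which depends on the unit `u` only up to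
sign. -/
noncomputable def zeta (s : ℂ) (q : UnitsModSign m) : ℂ :=
  Quotient.liftOn' q (fun u ↦ hurwitzZetaEven (toAddCircle (u : ZMod m)) s) fun u v huv ↦ by
    obtain rfl | rfl := mk_eq_mk_iff.mp (Quotient.sound' huv)
    · rfl
    · simp only [Units.val_neg, map_neg, hurwitzZetaEven_neg]

theorem zeta_mk (s : ℂ) (u : (ZMod m)ˣ) :
    zeta s (mk u) = hurwitzZetaEven (toAddCircle (u : ZMod m)) s :=
  rfl

theorem sum_char_mul_zeta_ne_zero (ψ : UnitsModSign m →* ℂˣ) {s : ℂ} (hs : 1 ≤ s.re)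
    (hs_one : s ≠ 1) : ∑ q, (ψ q : ℂ) * zeta s q ≠ 0 := by
  classical
  let χ : DirichletCharacter ℂ m := MulChar.ofUnitHom (ψ.comp mk)
  have hχ (u : (ZMod m)ˣ) : χ u = ψ (mk u) := MulChar.ofUnitHom_coe _ u
  have hχ_even : χ.Even := by
    have hmk : (mk (-1) : UnitsModSign m) = 1 := by
      rw [← map_one mk, mk_eq_mk_iff]
      exact .inr rfl
    rw [DirichletCharacter.Even, ← Units.val_one, ← Units.val_neg, hχ, hmk, map_one, Units.val_one]
  have hsum := sum_units_mul_hurwitzZetaEven_ne_zero hχ_even hs (.inr hs_one)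
  simp_rw [hχ, ← zeta_mk] at hsum
  have hcomp := sum_comp_monoidHom_of_surjective mk_surjective
    fun q : UnitsModSign m ↦ (ψ q : ℂ) * zeta s q
  exact fun h ↦ hsum (hcomp.trans (by rw [h, smul_zero]))

theorem det_groupMatrix_zeta_ne_zero [DecidableEq (UnitsModSign m)] {s : ℂ} (hs : 1 ≤ s.re)
    (hs_one : s ≠ 1) : (groupMatrix (zeta s : UnitsModSign m → ℂ)).det ≠ 0 :=
  det_groupMatrix_ne_zero fun ψ ↦ sum_char_mul_zeta_ne_zero ψ hs hs_one

end UnitsModSign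

/-- The set `S` of integers `1 ≤ ℓ < m / 2` coprime to `m`. -/
abbrev HalfResidue (m : ℕ) : Type :=
  {ℓ : ℕ // ℓ ∈ (Finset.range m).filter fun ℓ => 1 ≤ ℓ ∧ 2 * ℓ < m ∧ Nat.gcd ℓ m = 1}

namespace HalfResidue

variable {m : ℕ}

theorem one_le (k : HalfResidue m) : 1 ≤ (k : ℕ) :=
  (Finset.mem_filter.mp k.2).2.1

theorem two_mul_lt (k : HalfResidue m) : 2 * (k : ℕ) < m :=
  (Finset.mem_filter.mp k.2).2.2.1

theorem coprime (k : HalfResidue m) : Nat.Coprime k m :=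
  (Finset.mem_filter.mp k.2).2.2.2

/-- The residue class of an element of `S`, as a unit modulo `m`. -/
def toUnit (k : HalfResidue m) : (ZMod m)ˣ :=
  unitOfCoprime k k.coprime

theorem val_toUnit (k : HalfResidue m) : (k.toUnit : ZMod m) = (k : ℕ) :=
  coe_unitOfCoprime k k.coprime

theorem natAbs_valMinAbs_toUnit (k : HalfResidue m) :
    (k.toUnit : ZMod m).valMinAbs.natAbs = k := by
  have hk : (k : ℕ) ≤ m / 2 := by have := k.two_mul_lt; omega
  rw [val_toUnit, valMinAbs_natCast_of_le_half hk, Int.natAbs_natCast]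

theorem natAbs_valMinAbs_mem (hm : 3 ≤ m) (u : (ZMod m)ˣ) :
    (u : ZMod m).valMinAbs.natAbs ∈
      (Finset.range m).filter fun ℓ => 1 ≤ ℓ ∧ 2 * ℓ < m ∧ Nat.gcd ℓ m = 1 := by
  have : NeZero m := ⟨by omega⟩
  set a := (u : ZMod m).valMinAbs.natAbs with ha
  have hle : a ≤ m / 2 := natAbs_valMinAbs_le _
  have hcoprime : Nat.Coprime a m := by
    rw [← isUnit_iff_coprime, ha, natCast_natAbs_valMinAbs]
    split_ifs
    exacts [u.isUnit, u.isUnit.neg]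
  have hpos : a ≠ 0 := by
    intro h
    rw [h, Nat.coprime_zero_left] at hcoprime
    omega
  have hlt : 2 * a ≠ m := by
    intro h
    have := hcoprime.eq_one_of_dvd ⟨2, by omega⟩
    omega
  simp only [Finset.mem_filter, Finset.mem_range]
  exact ⟨by omega, by omega, by omega, hcoprime⟩

theorem bijective_mk_toUnit (hm : 3 ≤ m) :
    Function.Bijective fun k : HalfResidue m ↦ UnitsModSign.mk k.toUnit := by
  have : NeZero m := ⟨by omega⟩
  have hmk (u v : (ZMod m)ˣ) : UnitsModSign.mk u = UnitsModSign.mk v ↔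
      (u : ZMod m).valMinAbs.natAbs = (v : ZMod m).valMinAbs.natAbs := by
    rw [UnitsModSign.mk_eq_mk_iff, natAbs_valMinAbs_eq_natAbs_valMinAbs, Units.ext_iff,
      Units.ext_iff, Units.val_neg]
  constructor
  · intro k ℓ h
    have habs := (hmk _ _).mp h
    rw [natAbs_valMinAbs_toUnit, natAbs_valMinAbs_toUnit] at habs
    exact Subtype.ext habs
  · intro q
    obtain ⟨u, rfl⟩ := UnitsModSign.mk_surjective q
    refine ⟨⟨_, natAbs_valMinAbs_mem hm u⟩, (hmk _ _).mpr ?_⟩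
    rw [natAbs_valMinAbs_toUnit]

theorem one_div_sin_sq_eq_zeta [NeZero m] (k ℓ : HalfResidue m) :
    ((1 / sin (π * (k : ℕ) * (ℓ : ℕ) / m) ^ 2 : ℝ) : ℂ) =
      2 / π ^ 2 * UnitsModSign.zeta 2 (UnitsModSign.mk k.toUnit * UnitsModSign.mk ℓ.toUnit) := by
  have hcast : ((k.toUnit * ℓ.toUnit : (ZMod m)ˣ) : ZMod m) = ((k * ℓ : ℕ) : ZMod m) := by
    rw [Units.val_mul, val_toUnit, val_toUnit, Nat.cast_mul]
  have : Fact (1 < m) := ⟨by have := k.one_le; have := k.two_mul_lt; omega⟩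
  have hne : ((k * ℓ : ℕ) : ZMod m) ≠ 0 := hcast ▸ Units.ne_zero _
  have hπ : (π : ℂ) ≠ 0 := Complex.ofReal_ne_zero.mpr pi_ne_zero
  rw [← map_mul, UnitsModSign.zeta_mk, hcast, hurwitzZetaEven_toAddCircle_natCast_two hne]
  push_cast
  field_simp

end HalfResidue

/-- The matrix with entries `csc² (π k ℓ / m)`, indexed by the integers
`1 ≤ ℓ < m/2` coprime to `m`, has nonzero determinant. -/
theorem csc_sq_matrix_det_ne_zero (m : ℕ) (hm : 3 ≤ m) :
    Matrix.det
      (Matrix.of fun k ℓ : {ℓ : ℕ // ℓ ∈ (Finset.range m).filter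
          fun ℓ => 1 ≤ ℓ ∧ 2 * ℓ < m ∧ Nat.gcd ℓ m = 1} =>
        (1 : ℝ) / Real.sin (Real.pi * ((k : ℕ) : ℝ) * ((ℓ : ℕ) : ℝ) / (m : ℝ)) ^ 2) ≠ 0 := by
  classical
  have : NeZero m := ⟨by omega⟩
  let e : HalfResidue m ≃ UnitsModSign m := .ofBijective _ (HalfResidue.bijective_mk_toUnit hm)
  let Z : Matrix (UnitsModSign m) (UnitsModSign m) ℂ := groupMatrix (UnitsModSign.zeta 2)
  have hZ : Z.det ≠ 0 := UnitsModSign.det_groupMatrix_zeta_ne_zero (by norm_num) (by norm_num)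
  suffices hmatrix : Complex.ofRealHom.mapMatrix (Matrix.of fun k ℓ : HalfResidue m ↦
      1 / sin (π * (k : ℕ) * (ℓ : ℕ) / m) ^ 2) = (2 / π ^ 2 : ℂ) • Z.submatrix e e by
    intro hdet
    have hdetZ := congrArg Matrix.det hmatrix
    rw [← RingHom.map_det, hdet, map_zero, Matrix.det_smul,
      Matrix.det_submatrix_equiv_self] at hdetZ
    simp [hZ, pi_ne_zero] at hdetZ
  ext k ℓ
  exact HalfResidue.one_div_sin_sq_eq_zeta k ℓ
end

section
/- Let p be an odd prime and set q = (p − 1)/2. The q × q real matrix A with entries A_{k,ℓ} = 1/sin²(πkℓ/p) for 1 ≤ k, ℓ ≤ q is invertible, i.e. det(A) ≠ 0. -/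
/-!
Put `p = 2q + 1` and `f m = csc² (πm / p)`. Modulo `p` and up to sign, the products `kℓ` with
`1 ≤ k, ℓ ≤ q` form a Latin square on `{1, …, q}`, and `f` depends only on the class of its
argument modulo `p` up to sign. As `p` is prime, equality up to sign modulo `p` is equality of
squares in `ZMod p`. Every value `f m` thus occurs exactly once in each row and each column of the
matrix, and a permutation of the columns puts `f 1` on the whole diagonal. The permuted matrix is
strictly diagonally dominant: with `θ = π / p`,
`csc² (jθ) ≤ 1 / (sin ((j - 1)θ) sin (jθ)) = (cot ((j - 1)θ) - cot (jθ)) / sin θ`,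
which telescopes to `∑_{2 ≤ j ≤ q} csc² (jθ) ≤ cot θ / sin θ < csc² θ`.
-/

open Finset Function Real

theorem det_ne_zero_of_latinSquare {ι K : Type*} [Fintype ι] [DecidableEq ι] [NormedField K]
    {L : ι → ι → ι} (hrow : ∀ k, Injective (L k)) (hcol : ∀ l, Injective fun k ↦ L k l)
    {f : ι → K} {i₀ : ι} (hf : ∑ i ∈ univ.erase i₀, ‖f i‖ < ‖f i₀‖) :
    (Matrix.of fun k l ↦ f (L k l)).det ≠ 0 := by
  have hrow' (k : ι) : Bijective (L k) := Finite.injective_iff_bijective.mp (hrow k)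
  choose pivot hpivot using fun k ↦ (hrow' k).surjective i₀
  have pivot_injective : Injective pivot := fun k k' h ↦
    hcol (pivot k) <| (hpivot k).trans <| (hpivot k').symm.trans <| by rw [h]
  let e : Equiv.Perm ι := .ofBijective pivot (Finite.injective_iff_bijective.mp pivot_injective)
  have hdet : ((Matrix.of fun k l ↦ f (L k l)).submatrix id e).det ≠ 0 := by
    refine det_ne_zero_of_sum_row_lt_diag fun k ↦ ?_
    have hdiag : L k (e k) = i₀ := hpivot k
    have hbij : Bijective fun j ↦ L k (e j) := (hrow' k).comp e.bijective
    calc ∑ j ∈ univ.erase k, ‖f (L k (e j))‖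
        = ∑ i ∈ univ.erase i₀, ‖f i‖ :=
          sum_bijective _ hbij (fun j ↦ by simp [← hdiag, hbij.injective.ne_iff' rfl])
            fun _ _ ↦ rfl
      _ < ‖f (L k (e k))‖ := by rwa [hdiag]
  rw [Matrix.det_permute'] at hdet
  exact right_ne_zero_of_mul hdet

theorem cot_sub_cot_eq_sin_sub_div {x y : ℝ} (hx : sin x ≠ 0) (hy : sin y ≠ 0) :
    cot x - cot y = sin (y - x) / (sin x * sin y) := by
  rw [cot_eq_cos_div_sin, cot_eq_cos_div_sin, div_sub_div _ _ hx hy, sin_sub]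
  ring

theorem one_div_sin_add_sq_le {x θ : ℝ} (hx : 0 < x) (hθ : 0 < θ) (h : x + θ ≤ π / 2) :
    1 / sin (x + θ) ^ 2 ≤ (cot x - cot (x + θ)) / sin θ := by
  have hsin_x : 0 < sin x := sin_pos_of_pos_of_lt_pi hx (by linarith)
  have hsin_θ : 0 < sin θ := sin_pos_of_pos_of_lt_pi hθ (by linarith)
  have hsin_le : sin x ≤ sin (x + θ) :=
    sin_le_sin_of_le_of_le_pi_div_two (by linarith) h (by linarith)
  have hsin_add : 0 < sin (x + θ) := hsin_x.trans_le hsin_le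
  calc 1 / sin (x + θ) ^ 2
      ≤ 1 / (sin x * sin (x + θ)) := by rw [sq]; gcongr
    _ = (cot x - cot (x + θ)) / sin θ := by
        rw [cot_sub_cot_eq_sin_sub_div hsin_x.ne' hsin_add.ne', add_sub_cancel_left]
        field_simp

theorem sum_one_div_sin_sq_le {θ : ℝ} {n : ℕ} (hθ : 0 < θ) (hn : (n + 1) * θ ≤ π / 2) :
    ∑ j ∈ range n, 1 / sin ((j + 2) * θ) ^ 2 ≤ (cot θ - cot ((n + 1) * θ)) / sin θ := by
  let c (j : ℕ) : ℝ := cot ((j + 1) * θ)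
  have hterm (j : ℕ) (hj : j ∈ range n) :
      1 / sin ((j + 2) * θ) ^ 2 ≤ (c j - c (j + 1)) / sin θ := by
    have hjn : (j + 2 : ℝ) ≤ n + 1 := by exact_mod_cast Nat.succ_le_succ (mem_range.mp hj)
    have hle : (j + 2) * θ ≤ π / 2 := (mul_le_mul_of_nonneg_right hjn hθ.le).trans hn
    have hadd : (j + 1) * θ + θ = (j + 2) * θ := by ring
    have hcast : ((j + 1 : ℕ) + 1 : ℝ) * θ = (j + 2) * θ := by push_cast; ring
    simpa only [c, hadd, hcast] using
      one_div_sin_add_sq_le (x := (j + 1) * θ) (by positivity) hθ (hadd.trans_le hle)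
  calc ∑ j ∈ range n, 1 / sin ((j + 2) * θ) ^ 2
      ≤ ∑ j ∈ range n, (c j - c (j + 1)) / sin θ := sum_le_sum hterm
    _ = (c 0 - c n) / sin θ := by rw [← sum_div, sum_range_sub']
    _ = (cot θ - cot ((n + 1) * θ)) / sin θ := by simp only [c, Nat.cast_zero, zero_add, one_mul]

theorem sum_one_div_sin_sq_lt {θ : ℝ} {n : ℕ} (hθ : 0 < θ) (hn : (n + 1) * θ ≤ π / 2) :
    ∑ j ∈ range n, 1 / sin ((j + 2) * θ) ^ 2 < 1 / sin θ ^ 2 := by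
  have hθ_le : θ ≤ π / 2 := (le_mul_of_one_le_left hθ.le (by simp)).trans hn
  have hsin : 0 < sin θ := sin_pos_of_pos_of_lt_pi hθ (by linarith)
  have hcos : cos θ < 1 := by
    simpa only [cos_zero] using cos_lt_cos_of_nonneg_of_le_pi_div_two le_rfl hθ_le hθ
  have hcot : 0 ≤ cot ((n + 1) * θ) := by
    have hpos : 0 < (n + 1) * θ := by positivity
    rw [cot_eq_cos_div_sin]
    exact div_nonneg (cos_nonneg_of_neg_pi_div_two_le_of_le (by linarith) hn)
      (sin_nonneg_of_nonneg_of_le_pi hpos.le (by linarith))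
  calc ∑ j ∈ range n, 1 / sin ((j + 2) * θ) ^ 2
      ≤ (cot θ - cot ((n + 1) * θ)) / sin θ := sum_one_div_sin_sq_le hθ hn
    _ ≤ cot θ / sin θ := by gcongr; exact sub_le_self _ hcot
    _ = cos θ / sin θ ^ 2 := by rw [cot_eq_cos_div_sin, div_div, sq]
    _ < 1 / sin θ ^ 2 := by gcongr

theorem sum_erase_zero_one_div_sin_sq_lt (n : ℕ) :
    ∑ m ∈ univ.erase (0 : Fin (n + 1)),
        1 / sin (π * (m + 1 : ℕ) / (2 * (n + 1) + 1 : ℕ)) ^ 2 <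
      1 / sin (π / (2 * (n + 1) + 1 : ℕ)) ^ 2 := by
  set p : ℕ := 2 * (n + 1) + 1 with hp
  have hθ : 0 < π / p := by positivity
  have hn : (n + 1) * (π / p) ≤ π / 2 := by
    rw [← mul_div_assoc, div_le_div_iff₀ (by positivity) two_pos, hp]
    push_cast
    linarith [pi_pos]
  have hangle (j : ℕ) : π * (j + 1 + 1 : ℕ) / p = (j + 2) * (π / p) := by push_cast; ring
  rw [sum_erase_eq_sub (mem_univ _), Fin.sum_univ_succ, add_sub_cancel_left]
  simp only [Fin.val_succ, hangle]
  rw [Fin.sum_univ_eq_sum_range fun j ↦ 1 / sin ((j + 2) * (π / p)) ^ 2]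
  exact sum_one_div_sin_sq_lt hθ hn

theorem sin_pi_mul_div_eq_zero_of_dvd {n a : ℤ} (hn : n ≠ 0) (h : n ∣ a) :
    sin (π * a / n) = 0 := by
  obtain ⟨t, rfl⟩ := h
  have hangle : π * (n * t : ℤ) / n = t * π := by push_cast; field_simp
  rw [hangle, sin_int_mul_pi]

theorem sin_sq_sub_sin_sq (x y : ℝ) : sin x ^ 2 - sin y ^ 2 = sin (x - y) * sin (x + y) := by
  rw [sin_sub, sin_add]
  linear_combination (-sin x ^ 2) * sin_sq_add_cos_sq y + sin y ^ 2 * sin_sq_add_cos_sq x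

theorem sin_sq_pi_mul_div_eq_of_sq_eq {p : ℕ} [Fact p.Prime] {a b : ℕ}
    (h : (a : ZMod p) ^ 2 = (b : ZMod p) ^ 2) : sin (π * a / p) ^ 2 = sin (π * b / p) ^ 2 := by
  have hp : (p : ℤ) ≠ 0 := NeZero.ne _
  rw [← sub_eq_zero, sin_sq_sub_sin_sq, ← sub_div, ← mul_sub, ← add_div, ← mul_add, mul_eq_zero]
  rcases sq_eq_sq_iff_eq_or_eq_neg.mp h with h | h
  · left
    have hdvd : (p : ℤ) ∣ a - b := by
      rw [← ZMod.intCast_zmod_eq_zero_iff_dvd]; simp [h]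
    exact_mod_cast sin_pi_mul_div_eq_zero_of_dvd hp hdvd
  · right
    have hdvd : (p : ℤ) ∣ a + b := by
      rw [← ZMod.intCast_zmod_eq_zero_iff_dvd]; simp [h]
    exact_mod_cast sin_pi_mul_div_eq_zero_of_dvd hp hdvd

theorem natCast_succ_ne_zero_of_fin {q : ℕ} (k : Fin q) :
    ((k + 1 : ℕ) : ZMod (2 * q + 1)) ≠ 0 := by
  rw [Ne, ZMod.natCast_eq_zero_iff]
  exact Nat.not_dvd_of_pos_of_lt k.val.succ_pos (by omega)

theorem natCast_succ_sq_injective {q : ℕ} [Fact (2 * q + 1).Prime] :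
    Injective fun k : Fin q ↦ ((k + 1 : ℕ) : ZMod (2 * q + 1)) ^ 2 := by
  intro k l h
  rcases sq_eq_sq_iff_eq_or_eq_neg.mp h with h | h
  · rw [ZMod.natCast_eq_natCast_iff', Nat.mod_eq_of_lt (by omega), Nat.mod_eq_of_lt (by omega)] at h
    exact Fin.ext (Nat.succ_injective h)
  · rw [eq_neg_iff_add_eq_zero, ← Nat.cast_add, ZMod.natCast_eq_zero_iff] at h
    exact absurd h (Nat.not_dvd_of_pos_of_lt (by omega) (by omega))

theorem exists_natCast_succ_sq_eq {q : ℕ} {a : ZMod (2 * q + 1)} (ha : a ≠ 0) :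
    ∃ m : Fin q, ((m + 1 : ℕ) : ZMod (2 * q + 1)) ^ 2 = a ^ 2 := by
  have hpos : 0 < a.valMinAbs.natAbs := Int.natAbs_pos.mpr ((ZMod.valMinAbs_eq_zero a).not.mpr ha)
  have hle : a.valMinAbs.natAbs ≤ (2 * q + 1) / 2 := ZMod.natAbs_valMinAbs_le a
  refine ⟨⟨a.valMinAbs.natAbs - 1, by omega⟩, ?_⟩
  rw [Nat.sub_add_cancel hpos, ZMod.natCast_natAbs_valMinAbs]
  split_ifs
  · rfl
  · exact neg_sq a

theorem exists_latinSquare_mul_sq (q : ℕ) [Fact (2 * q + 1).Prime] :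
    ∃ L : Fin q → Fin q → Fin q, (∀ k, Injective (L k)) ∧ (∀ l, Injective fun k ↦ L k l) ∧
      ∀ k l, ((L k l + 1 : ℕ) : ZMod (2 * q + 1)) ^ 2 =
        (((k + 1) * (l + 1) : ℕ) : ZMod (2 * q + 1)) ^ 2 := by
  let s (k : Fin q) : ZMod (2 * q + 1) := (k + 1 : ℕ)
  have hs (k : Fin q) : s k ^ 2 ≠ 0 := pow_ne_zero 2 (natCast_succ_ne_zero_of_fin k)
  choose L hL using fun k l : Fin q ↦ exists_natCast_succ_sq_eq
    (mul_ne_zero (natCast_succ_ne_zero_of_fin k) (natCast_succ_ne_zero_of_fin l))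
  have hmul (k l : Fin q) : s (L k l) ^ 2 = s k ^ 2 * s l ^ 2 := (hL k l).trans (mul_pow _ _ 2)
  refine ⟨L, fun k l l' h ↦ ?_, fun l k k' h ↦ ?_, fun k l ↦ by rw [hL, Nat.cast_mul]⟩
  · have heq : s k ^ 2 * s l ^ 2 = s k ^ 2 * s l' ^ 2 := by rw [← hmul, ← hmul, h]
    exact natCast_succ_sq_injective (mul_left_cancel₀ (hs k) heq)
  · have heq : s k ^ 2 * s l ^ 2 = s k' ^ 2 * s l ^ 2 := by
      rw [← hmul, ← hmul]
      exact congrArg (s · ^ 2) h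
    exact natCast_succ_sq_injective (mul_right_cancel₀ (hs l) heq)

/-- For an odd prime `p` and `q = (p-1)/2`, the `q × q` matrix with entries
`csc² (π k ℓ / p)` for `1 ≤ k, ℓ ≤ q` is invertible. -/
theorem csc_sq_matrix_det_ne_zero_prime (p : ℕ) (hp : Nat.Prime p) (hodd : Odd p) :
    Matrix.det
      (Matrix.of fun k ℓ : Fin ((p - 1) / 2) =>
        (1 : ℝ) / Real.sin (Real.pi * (((k : ℕ) + 1 : ℕ) : ℝ) * (((ℓ : ℕ) + 1 : ℕ) : ℝ) / (p : ℝ)) ^ 2)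
      ≠ 0 := by
  obtain ⟨q, rfl⟩ := hodd
  have : Fact (2 * q + 1).Prime := ⟨hp⟩
  obtain ⟨n, rfl⟩ : ∃ n, q = n + 1 := Nat.exists_eq_succ_of_ne_zero (by rintro rfl; norm_num at hp)
  rw [show (2 * (n + 1) + 1 - 1) / 2 = n + 1 by omega]
  obtain ⟨L, hrow, hcol, hL⟩ := exists_latinSquare_mul_sq (n + 1)
  let f (m : Fin (n + 1)) : ℝ := 1 / sin (π * (m + 1 : ℕ) / (2 * (n + 1) + 1 : ℕ)) ^ 2
  have hf_norm (m : Fin (n + 1)) : ‖f m‖ = f m := norm_of_nonneg (by positivity)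
  have hf : ∑ m ∈ univ.erase 0, ‖f m‖ < ‖f 0‖ := by
    simpa [hf_norm, f] using sum_erase_zero_one_div_sin_sq_lt n
  have hmatrix (k l : Fin (n + 1)) :
      1 / sin (π * (k + 1 : ℕ) * (l + 1 : ℕ) / (2 * (n + 1) + 1 : ℕ)) ^ 2 = f (L k l) := by
    rw [mul_assoc, ← Nat.cast_mul, ← sin_sq_pi_mul_div_eq_of_sq_eq (hL k l)]
  simp only [hmatrix]
  exact det_ne_zero_of_latinSquare hrow hcol hf
end

section
/- Let m ≥ 1 be an integer, ζ = exp(2πi/m) ∈ ℂ, and d = ⌊m/2⌋. Define the (d+1) × (d+1) complex matrix J, with rows indexed by r ∈ {0, 1, …, d} and columns indexed by j ∈ {0, 1, …, d}, by: J_{r,j} = ζ^{rj} + ζ^{−rj} if 1 ≤ j < m/2, and J_{r,j} = ζ^{rj} if j = 0 or if m is even and j = m/2. Then J is invertible. -/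
/-!
The `j`-th column of `J` sums the characters `r ↦ ζ ^ (r * k)` over the orbit `{j, -j}` of negation
on `ZMod m`, and `0, …, ⌊m / 2⌋` represent these orbits. An even function may therefore be summed
over `ZMod m` orbit by orbit, so in `J ^ 2` the sum over columns unfolds to one over all of
`ZMod m`, and orthogonality of characters gives `J ^ 2 = m`.
-/

open Finset

section NegOrbit

variable {G : Type*} [InvolutiveNeg G] [DecidableEq G]

/-- The orbit of `a` under negation, as a `Finset`; it has one element when `a = -a`. -/
def negOrbit (a : G) : Finset G := {a, -a}

theorem mem_negOrbit {a b : G} : b ∈ negOrbit a ↔ b = a ∨ b = -a := by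
  rw [negOrbit, mem_insert, mem_singleton]

theorem neg_mem_negOrbit {a b : G} : -b ∈ negOrbit a ↔ b ∈ negOrbit a := by
  rw [mem_negOrbit, mem_negOrbit, neg_inj, neg_eq_iff_eq_neg, or_comm]

theorem sum_negOrbit_comp_neg {M : Type*} [AddCommMonoid M] (a : G) (f : G → M) :
    ∑ k ∈ negOrbit a, f (-k) = ∑ k ∈ negOrbit a, f k :=
  sum_equiv (Equiv.neg G) (fun _ ↦ neg_mem_negOrbit.symm) fun _ _ ↦ rfl

theorem sum_negOrbit_mul_of_even {R : Type*} [NonUnitalNonAssocSemiring R] {g : G → R}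
    (hg : g.Even) (a : G) (f : G → R) :
    (∑ k ∈ negOrbit a, f k) * g a = ∑ k ∈ negOrbit a, f k * g k := by
  rw [sum_mul]
  refine sum_congr rfl fun k hk ↦ ?_
  obtain rfl | rfl := mem_negOrbit.mp hk
  · rfl
  · rw [hg]

end NegOrbit

section OrbitCharacter

/-- The sum of the characters `k ↦ ψ (k * l)` over the orbit of `a` under negation. When `ψ` is a
primitive character of `ZMod m`, these are the characters of the representations `ρ_q ⊕ ρ_{q⁻¹}`,
and of the single `ρ_q` when `q = q⁻¹`. -/
def orbitCharacter {S R : Type*} [Ring S] [DecidableEq S] [Semiring R] (ψ : AddChar S R)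
    (a k : S) : R :=
  ∑ l ∈ negOrbit a, ψ (k * l)

theorem orbitCharacter_even {S R : Type*} [Ring S] [DecidableEq S] [Semiring R]
    (ψ : AddChar S R) (a : S) : (orbitCharacter ψ a).Even := fun k ↦ by
  simpa only [orbitCharacter, neg_mul, mul_neg] using
    sum_negOrbit_comp_neg a fun l ↦ ψ (k * l)

theorem sum_mul_orbitCharacter {S R : Type*} [CommRing S] [Fintype S] [DecidableEq S]
    [CommRing R] [IsDomain R] {ψ : AddChar S R} (hψ : ψ.IsPrimitive) (a b : S) :
    ∑ k, ψ (a * k) * orbitCharacter ψ b k =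
      if a ∈ negOrbit b then (Fintype.card S : R) else 0 := by
  calc ∑ k, ψ (a * k) * orbitCharacter ψ b k
      = ∑ l ∈ negOrbit b, ∑ k, ψ (k * (a + l)) := by
        simp only [orbitCharacter, mul_sum, ← AddChar.map_add_eq_mul, mul_comm a, ← mul_add]
        exact sum_comm
    _ = ∑ l ∈ negOrbit b, if -a = l then (Fintype.card S : R) else 0 := by
        simp only [AddChar.sum_mulShift _ hψ, ← neg_eq_iff_add_eq_zero, Nat.cast_ite,
          Nat.cast_zero]
    _ = if a ∈ negOrbit b then (Fintype.card S : R) else 0 := by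
        simp only [sum_ite_eq, neg_mem_negOrbit]

end OrbitCharacter

section ZMod

variable {m : ℕ}

theorem mem_negOrbit_natCast_iff {j : ℕ} (hj : j ≤ m / 2) {k : ZMod m} :
    k ∈ negOrbit (j : ZMod m) ↔ k.valMinAbs.natAbs = j := by
  rw [mem_negOrbit, ← ZMod.natAbs_valMinAbs_eq_natAbs_valMinAbs,
    ZMod.valMinAbs_natCast_of_le_half hj, Int.natAbs_natCast]

theorem natCast_mem_negOrbit_natCast_iff {r s : ℕ} (hr : r ≤ m / 2) (hs : s ≤ m / 2) :
    (r : ZMod m) ∈ negOrbit (s : ZMod m) ↔ r = s := by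
  rw [mem_negOrbit_natCast_iff hs, ZMod.valMinAbs_natCast_of_le_half hr, Int.natAbs_natCast]

theorem natCast_eq_neg_natCast_iff {j : ℕ} (hj : j ≤ m / 2) :
    (j : ZMod m) = -(j : ZMod m) ↔ j = 0 ∨ 2 * j = m := by
  rw [eq_neg_iff_add_eq_zero, ← Nat.cast_add, ZMod.natCast_eq_zero_iff, ← two_mul]
  constructor
  · intro hdvd
    rcases Nat.eq_zero_or_pos j with h0 | hpos
    · exact .inl h0
    · have := Nat.le_of_dvd (by omega) hdvd
      omega
  · rintro (rfl | rfl) <;> simp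

theorem sum_sum_negOrbit [NeZero m] {M : Type*} [AddCommMonoid M] (f : ZMod m → M) :
    ∑ j : Fin (m / 2 + 1), ∑ k ∈ negOrbit ((j : ℕ) : ZMod m), f k = ∑ k, f k := by
  let orbitIndex (k : ZMod m) : Fin (m / 2 + 1) :=
    ⟨k.valMinAbs.natAbs, Nat.lt_succ_of_le k.natAbs_valMinAbs_le⟩
  rw [← sum_fiberwise univ orbitIndex f]
  refine sum_congr rfl fun j _ ↦ sum_congr ?_ fun _ _ ↦ rfl
  ext k
  simp only [mem_negOrbit_natCast_iff j.is_le, mem_filter_univ, orbitIndex, Fin.ext_iff]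

/-- The matrix `J` attached to an additive character `ψ` of `ZMod m`: column `j` lists the values
of `orbitCharacter ψ j` at `0, …, ⌊m / 2⌋`, which represent the orbits of negation on `ZMod m`. -/
def orbitCharacterMatrix {R : Type*} [Semiring R] (ψ : AddChar (ZMod m) R) :
    Matrix (Fin (m / 2 + 1)) (Fin (m / 2 + 1)) R :=
  .of fun r j ↦ orbitCharacter ψ ((j : ℕ) : ZMod m) ((r : ℕ) : ZMod m)

theorem orbitCharacterMatrix_sq [NeZero m] {R : Type*} [CommRing R] [IsDomain R]
    {ψ : AddChar (ZMod m) R} (hψ : ψ.IsPrimitive) : orbitCharacterMatrix ψ ^ 2 = m := by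
  ext r s
  calc (orbitCharacterMatrix ψ ^ 2) r s
      = ∑ j : Fin (m / 2 + 1), (∑ k ∈ negOrbit ((j : ℕ) : ZMod m), ψ ((r : ℕ) * k)) *
          orbitCharacter ψ ((s : ℕ) : ZMod m) (j : ℕ) := by
        rw [sq, Matrix.mul_apply]; rfl
    _ = ∑ k, ψ ((r : ℕ) * k) * orbitCharacter ψ ((s : ℕ) : ZMod m) k := by
        simp only [sum_negOrbit_mul_of_even (orbitCharacter_even ψ _), sum_sum_negOrbit]
    _ = if r = s then (m : R) else 0 := by
        simp only [sum_mul_orbitCharacter hψ, ZMod.card,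
          natCast_mem_negOrbit_natCast_iff r.is_le s.is_le, Fin.ext_iff]
    _ = (m : Matrix (Fin (m / 2 + 1)) (Fin (m / 2 + 1)) R) r s := by
        rw [Matrix.natCast_apply, Nat.cast_ite, Nat.cast_zero]

theorem isUnit_orbitCharacterMatrix [NeZero m] {R : Type*} [CommRing R] [IsDomain R]
    {ψ : AddChar (ZMod m) R} (hψ : ψ.IsPrimitive) (hm : IsUnit (m : R)) :
    IsUnit (orbitCharacterMatrix ψ) := by
  rw [← isUnit_pow_iff two_ne_zero, orbitCharacterMatrix_sq hψ]
  simpa using hm.map (algebraMap R (Matrix (Fin (m / 2 + 1)) (Fin (m / 2 + 1)) R))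

theorem orbitCharacterMatrix_zmodChar_apply [NeZero m] {K : Type*} [Field K] {ζ : K}
    (hζ : ζ ^ m = 1) (r j : Fin (m / 2 + 1)) :
    orbitCharacterMatrix (AddChar.zmodChar m hζ) r j =
      if 1 ≤ (j : ℕ) ∧ 2 * (j : ℕ) < m then
        ζ ^ ((r : ℕ) * (j : ℕ)) + ζ ^ (-(((r : ℕ) * (j : ℕ) : ℕ) : ℤ))
      else
        ζ ^ ((r : ℕ) * (j : ℕ)) := by
  have hj : (j : ℕ) ≤ m / 2 := j.is_le
  have hψ : AddChar.zmodChar m hζ (((r : ℕ) : ZMod m) * (j : ℕ)) = ζ ^ ((r : ℕ) * (j : ℕ)) := by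
    rw [← Nat.cast_mul, AddChar.zmodChar_apply']
  rw [orbitCharacterMatrix, Matrix.of_apply, orbitCharacter, negOrbit]
  split_ifs with h
  · have hne : ((j : ℕ) : ZMod m) ≠ -((j : ℕ) : ZMod m) := by
      rw [Ne, natCast_eq_neg_natCast_iff hj]
      omega
    rw [sum_pair hne, mul_neg, AddChar.map_neg_eq_inv, hψ, zpow_neg, zpow_natCast]
  · have heq : ((j : ℕ) : ZMod m) = -((j : ℕ) : ZMod m) := by
      rw [natCast_eq_neg_natCast_iff hj]
      omega
    rw [← heq, pair_eq_singleton, sum_singleton, hψ]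

end ZMod

theorem character_matrix_invertible_general {K : Type*} [Field K] {m : ℕ} [NeZero m] {ζ : K}
    (hζ : IsPrimitiveRoot ζ m) :
    IsUnit
      (Matrix.of fun r j : Fin (m / 2 + 1) =>
        if 1 ≤ (j : ℕ) ∧ 2 * (j : ℕ) < m then
          ζ ^ ((r : ℕ) * (j : ℕ)) + ζ ^ (-(((r : ℕ) * (j : ℕ) : ℕ) : ℤ))
        else
          ζ ^ ((r : ℕ) * (j : ℕ))) := by
  have hm : IsUnit (m : K) := hζ.neZero'.out.isUnit
  convert isUnit_orbitCharacterMatrix (AddChar.zmodChar_primitive_of_primitive_root m hζ) hm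
  ext r j
  rw [orbitCharacterMatrix_zmodChar_apply, Matrix.of_apply]

/-- The character matrix `J` from Section 4.3: rows indexed by `r ∈ {0,…,⌊m/2⌋}`,
columns by `j ∈ {0,…,⌊m/2⌋}`, with entry `ζ^{rj} + ζ^{-rj}` for `1 ≤ j < m/2`
and `ζ^{rj}` for `j = 0` or (when `m` is even) `j = m/2`, where `ζ = exp(2πi/m)`.
Then `J` is invertible. -/
theorem character_matrix_invertible (m : ℕ) (hm : 1 ≤ m) :
    IsUnit
      (Matrix.of fun r j : Fin (m / 2 + 1) =>
        let ζ : ℂ := Complex.exp (2 * Real.pi * Complex.I / (m : ℂ))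
        if 1 ≤ (j : ℕ) ∧ 2 * (j : ℕ) < m then
          ζ ^ ((r : ℕ) * (j : ℕ)) + ζ ^ (-(((r : ℕ) * (j : ℕ) : ℕ) : ℤ))
        else
          ζ ^ ((r : ℕ) * (j : ℕ))) := by
  have : NeZero m := ⟨Nat.one_le_iff_ne_zero.mp hm⟩
  exact character_matrix_invertible_general (Complex.isPrimitiveRoot_exp m (NeZero.ne m))
end
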